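/- For the Kepler problem (m = n = 1), the movable points (x₁, y₁) = (u₁, (u₁² − κ²)p₁) and (x₂, y₂) = (u₂, (u₂² − κ²)p₂) lie on the curve y² = f(x), f(x) = I₁x⁴ − αx³ + (I₂ − I₁κ²)x² + κ²αx − I₂κ², where I₁, I₂ are the Kepler integrals in elliptic coordinates. -/

import Mathlib

/-- The movable points `(u₁, (u₁²-κ²)p₁)` and `(u₂, (u₂²-κ²)p₂)` of the Kepler
problem lie on the elliptic curve
`y² = I₁x⁴ - αx³ + (I₂ - I₁κ²)x² + κ²αx - I₂κ²`. -/
theorem kepler_points_on_curve {K : Type*} [Field K] [CharZero K]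
    (κ α u1 u2 p1 p2 I1 I2 : K)
    (hne : u1 ^ 2 ≠ u2 ^ 2) (hsum : u1 + u2 ≠ 0)
    (hI1 : I1 = ((u1 ^ 2 - κ ^ 2) * p1 ^ 2 - (u2 ^ 2 - κ ^ 2) * p2 ^ 2)
          / (u1 ^ 2 - u2 ^ 2) + α / (u1 + u2))
    (hI2 : I2 = (-u2 ^ 2 * (u1 ^ 2 - κ ^ 2) * p1 ^ 2
            + u1 ^ 2 * (u2 ^ 2 - κ ^ 2) * p2 ^ 2) / (u1 ^ 2 - u2 ^ 2)
          + α * u1 * u2 / (u1 + u2)) :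
    ((u1 ^ 2 - κ ^ 2) * p1) ^ 2
        = I1 * u1 ^ 4 - α * u1 ^ 3 + (I2 - I1 * κ ^ 2) * u1 ^ 2
          + κ ^ 2 * α * u1 - I2 * κ ^ 2 ∧
    ((u2 ^ 2 - κ ^ 2) * p2) ^ 2
        = I1 * u2 ^ 4 - α * u2 ^ 3 + (I2 - I1 * κ ^ 2) * u2 ^ 2
          + κ ^ 2 * α * u2 - I2 * κ ^ 2 := by
  have hD : u1 ^ 2 - u2 ^ 2 ≠ 0 := sub_ne_zero.mpr hne
  -- The quartic factors as `f(x) = (x² - κ²)(I₁x² - αx + I₂)`, so it suffices to solve the two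
  -- defining equations of `I₁`, `I₂`, linear in `pᵢ²`, for `(uᵢ² - κ²)pᵢ² = I₁uᵢ² - αuᵢ + I₂`.
  have h1 : (u1 ^ 2 - κ ^ 2) * p1 ^ 2 = I1 * u1 ^ 2 - α * u1 + I2 := by
    rw [hI1, hI2]
    generalize hd : u1 ^ 2 - u2 ^ 2 = D at hD
    field_simp
    rw [← hd]
    ring
  have h2 : (u2 ^ 2 - κ ^ 2) * p2 ^ 2 = I1 * u2 ^ 2 - α * u2 + I2 := by
    rw [hI1, hI2]
    generalize hd : u1 ^ 2 - u2 ^ 2 = D at hD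
    field_simp
    rw [← hd]
    ring
  constructor
  · linear_combination (u1 ^ 2 - κ ^ 2) * h1
  · linear_combination (u2 ^ 2 - κ ^ 2) * h2
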